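/- Let $N\ge 1$ be an integer, $\theta\in(0,1)$, $\theta<\alpha'<\alpha<1$, $\gamma>2$ and $0<k<1-\frac{2}{\gamma}$. For $\varepsilon\in(0,\min(1,\alpha-\theta))$ set $T_\varepsilon:=\ln\frac{\alpha-\theta}{\varepsilon}$ and $L_\varepsilon:=\gamma\sqrt{T_\varepsilon\ln\frac{1}{\varepsilon}}$. Then there exists $\varepsilon_0>0$ such that for all $\varepsilon\in(0,\varepsilon_0)$, all $L\ge L_\varepsilon$, and all $x\in\mathbb{R}^N$ with $|x|\le kL_\varepsilon$, one has $\theta+e^{T_\varepsilon}\left(\frac{\theta+\varepsilon}{(4\pi T_\varepsilon)^{N/2}}\int_{\{y\in\mathbb{R}^N:|y|<L\}}e^{-\frac{|x-y|^2}{4T_\varepsilon}}\,dy-\theta\right)\ge \alpha'$. -/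

import Mathlib

open MeasureTheory Real Set

lemma gauss_int {N : ℕ} (x : EuclideanSpace ℝ (Fin N)) {b : ℝ} (hb : 0 < b) :
    Integrable (fun y : EuclideanSpace ℝ (Fin N) => Real.exp (-b * ‖x - y‖ ^ 2)) ∧
    ∫ y : EuclideanSpace ℝ (Fin N), Real.exp (-b * ‖x - y‖ ^ 2) = (π / b) ^ ((N : ℝ) / 2) := by
  have h := GaussianFourier.integral_rexp_neg_mul_sq_norm (V := EuclideanSpace ℝ (Fin N)) hb
  rw [finrank_euclideanSpace_fin] at h
  have h2 : ∫ y : EuclideanSpace ℝ (Fin N), Real.exp (-b * ‖x - y‖ ^ 2)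
      = (π / b) ^ ((N : ℝ) / 2) := by
    rw [← h]
    exact integral_sub_left_eq_self
      (fun v : EuclideanSpace ℝ (Fin N) => Real.exp (-b * ‖v‖ ^ 2)) volume x
  refine ⟨?_, h2⟩
  by_contra hc
  rw [integral_undef hc] at h2
  have : 0 < (π / b) ^ ((N : ℝ) / 2) := by positivity
  linarith

lemma tail_bound {N : ℕ} (x : EuclideanSpace ℝ (Fin N)) {T s R L : ℝ} (hT : 0 < T)
    (hs0 : 0 < s) (hs1 : s < 1) (hR : 0 ≤ R) (hL : R ≤ L - ‖x‖) :
    (4 * π * T) ^ ((N : ℝ) / 2) *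
      (1 - (1 / (1 - s)) ^ ((N : ℝ) / 2) * Real.exp (-s * (R ^ 2 / (4 * T)))) ≤
    ∫ y in {y : EuclideanSpace ℝ (Fin N) | ‖y‖ < L}, Real.exp (-‖x - y‖ ^ 2 / (4 * T)) := by
  have hs : 0 < 1 - s := by linarith
  obtain ⟨i1, e1⟩ := gauss_int x (b := 1 / (4 * T)) (by positivity)
  obtain ⟨i2, e2⟩ := gauss_int x (b := (1 - s) / (4 * T)) (by positivity)
  have hm : MeasurableSet {y : EuclideanSpace ℝ (Fin N) | ‖y‖ < L} :=
    measurableSet_lt measurable_norm measurable_const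
  have hf : (fun y : EuclideanSpace ℝ (Fin N) => Real.exp (-‖x - y‖ ^ 2 / (4 * T))) =
      fun y => Real.exp (-(1 / (4 * T)) * ‖x - y‖ ^ 2) := by
    funext y; congr 1; ring
  rw [hf, ← integral_indicator hm]
  have e3 : π / (1 / (4 * T)) = 4 * π * T := by field_simp
  have e4 : π / ((1 - s) / (4 * T)) = (4 * π * T) * (1 / (1 - s)) := by field_simp
  rw [e3] at e1
  rw [e4, Real.mul_rpow (by positivity) (by positivity)] at e2
  have key := integral_mono (i1.sub (i2.const_mul (Real.exp (-s * (R ^ 2 / (4 * T))))))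
    (i1.indicator hm) (by
      intro y
      simp only [Pi.sub_apply]
      by_cases hy : ‖y‖ < L
      · rw [indicator_of_mem (by exact hy)]
        have := mul_pos (Real.exp_pos (-s * (R ^ 2 / (4 * T))))
          (Real.exp_pos (-((1 - s) / (4 * T)) * ‖x - y‖ ^ 2))
        linarith
      · rw [indicator_of_notMem (by exact hy), ← Real.exp_add, sub_nonpos]
        apply Real.exp_le_exp.mpr
        have h1 : R ≤ ‖x - y‖ := by
          have := norm_sub_norm_le y x
          rw [norm_sub_rev] at this
          linarith
        have h2 : R ^ 2 ≤ ‖x - y‖ ^ 2 := by gcongr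
        have h3 : s * (R ^ 2 / (4 * T)) ≤ s * (‖x - y‖ ^ 2 / (4 * T)) := by gcongr
        have h4 : -(1 / (4 * T)) * ‖x - y‖ ^ 2 =
          -(s * (‖x - y‖ ^ 2 / (4 * T))) + -((1 - s) / (4 * T)) * ‖x - y‖ ^ 2 := by ring
        rw [h4]; linarith)
  simp only [Pi.sub_apply] at key
  rw [integral_sub i1 (i2.const_mul _), integral_const_mul, e1, e2] at key
  refine le_trans (le_of_eq ?_) key
  ring

/-- Non-extinction in the toy model `w_t = Δw + w - θ` (Proposition 3.1): with
`T_ε = ln((α-θ)/ε)` and `L_ε = γ √(T_ε ln(1/ε))` for `γ > 2` and `0 < k < 1 - 2/γ`,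
for all small enough `ε`, all `L ≥ L_ε` and all `|x| ≤ k L_ε`, the explicit solution
`θ + e^{T_ε}((θ+ε)(4πT_ε)^{-N/2} ∫_{|y|<L} e^{-|x-y|²/(4T_ε)} dy - θ)` is `≥ α'`. -/
theorem toy_non_extinction
    (N : ℕ) (hN : 1 ≤ N) (θ α' α γ k : ℝ)
    (hθ0 : 0 < θ) (hθ1 : θ < 1) (hθα' : θ < α') (hα'α : α' < α) (hα : α < 1)
    (hγ : 2 < γ) (hk0 : 0 < k) (hk : k < 1 - 2 / γ) :
    ∃ ε₀ > (0 : ℝ), ∀ ε, 0 < ε → ε < ε₀ → ε < min 1 (α - θ) →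
      ∀ L, γ * Real.sqrt (Real.log ((α - θ) / ε) * Real.log (1 / ε)) ≤ L →
      ∀ x : EuclideanSpace ℝ (Fin N),
        ‖x‖ ≤ k * (γ * Real.sqrt (Real.log ((α - θ) / ε) * Real.log (1 / ε))) →
        α' ≤ θ + Real.exp (Real.log ((α - θ) / ε)) *
          ((θ + ε) / (4 * Real.pi * Real.log ((α - θ) / ε)) ^ ((N : ℝ) / 2) *
              (∫ y in {y : EuclideanSpace ℝ (Fin N) | ‖y‖ < L},
                Real.exp (-‖x - y‖ ^ 2 / (4 * Real.log ((α - θ) / ε)))) - θ) := by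
  have hγ0 : 0 < γ := by linarith
  have hkγ : 2 < (1 - k) * γ := by
    have : 2 / γ < 1 - k := by linarith
    rwa [div_lt_iff₀ hγ0] at this
  set a : ℝ := ((1 - k) * γ) ^ 2 / 4 with ha
  have ha1 : 1 < a := by rw [ha]; nlinarith
  have ha0 : 0 < a := by linarith
  obtain ⟨s, hsdef⟩ : ∃ s : ℝ, s = (1 + 1 / a) / 2 := ⟨_, rfl⟩
  have hia : 1 / a < 1 := by rw [div_lt_one ha0]; exact ha1
  have hs1 : s < 1 := by linarith
  have hs0 : 0 < s := by rw [hsdef]; positivity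
  have hsa : s * a - 1 = (a - 1) / 2 := by rw [hsdef]; field_simp; ring
  have hq : 0 < s * a - 1 := by rw [hsa]; linarith
  set C : ℝ := (1 / (1 - s)) ^ ((N : ℝ) / 2) with hC
  have hC0 : 0 < C := by
    have : 0 < 1 - s := by linarith
    positivity
  have hαθ : 0 < α - θ := by linarith
  have hαα : 0 < α - α' := by linarith
  set δ : ℝ := (α - α') / ((α - θ) * (2 * C)) with hδ
  have hδ0 : 0 < δ := by positivity
  refine ⟨δ ^ (1 / (s * a - 1)), by positivity, ?_⟩
  intro ε hε hε0 hεm L hL x hx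
  have hε1 : ε < 1 := lt_of_lt_of_le hεm (min_le_left _ _)
  have hε2 : ε < α - θ := lt_of_lt_of_le hεm (min_le_right _ _)
  have hpow : ε ^ (s * a - 1) ≤ δ := by
    have := Real.rpow_le_rpow hε.le hε0.le hq.le
    rwa [← Real.rpow_mul hδ0.le, one_div_mul_cancel hq.ne', Real.rpow_one] at this
  rw [Real.exp_log (by positivity)]
  have hT : 0 < Real.log ((α - θ) / ε) := Real.log_pos (by rwa [one_lt_div hε])
  set T := Real.log ((α - θ) / ε) with hTdef
  have hl : 0 < Real.log (1 / ε) := Real.log_pos (by rwa [one_lt_div hε])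
  set Lε := γ * Real.sqrt (T * Real.log (1 / ε)) with hLε
  have hLε0 : 0 ≤ Lε := by positivity
  have h1k : 0 < 1 - k := by
    by_contra h
    nlinarith
  have hb := tail_bound x (R := (1 - k) * Lε) (L := L) hT hs0 hs1 (by positivity) (by linarith)
  have hsq : Lε ^ 2 = γ ^ 2 * (T * Real.log (1 / ε)) := by
    rw [hLε, mul_pow, Real.sq_sqrt (by positivity)]
  have hexp : Real.exp (-s * (((1 - k) * Lε) ^ 2 / (4 * T))) = ε * ε ^ (s * a - 1) := by
    have : ε * ε ^ (s * a - 1) = ε ^ (s * a) := by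
      rw [Real.rpow_sub_one hε.ne']; field_simp
    rw [this, Real.rpow_def_of_pos hε, mul_pow, hsq, one_div, Real.log_inv, ha]
    congr 1
    field_simp
  rw [hexp, ← hC] at hb
  set I := ∫ y in {y : EuclideanSpace ℝ (Fin N) | ‖y‖ < L}, Real.exp (-‖x - y‖ ^ 2 / (4 * T))
  have hP : 0 < (4 * π * T) ^ ((N : ℝ) / 2) := by positivity
  set P := (4 * π * T) ^ ((N : ℝ) / 2)
  have h1 : 1 - C * (ε * ε ^ (s * a - 1)) ≤ I / P := by
    rw [le_div_iff₀ hP]; linarith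
  have h2 : 1 - C * (ε * δ) ≤ I / P := by
    refine le_trans ?_ h1
    gcongr
  have h3 : (θ + ε) * (1 - C * (ε * δ)) ≤ (θ + ε) / P * I := by
    have : (θ + ε) / P * I = (θ + ε) * (I / P) := by ring
    rw [this]; gcongr
  have h4 : ε * (1 - 2 * C * δ) ≤ (θ + ε) / P * I - θ := by
    have : 0 ≤ (2 - (θ + ε)) * (C * (ε * δ)) := mul_nonneg (by linarith) (by positivity)
    linarith
  have h5 : (α - θ) / ε * (ε * (1 - 2 * C * δ)) ≤ (α - θ) / ε * ((θ + ε) / P * I - θ) := by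
    gcongr
  have h6 : (α - θ) / ε * (ε * (1 - 2 * C * δ)) = α' - θ := by
    rw [hδ]; field_simp; ring
  linarith
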